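/- For every real number d ≥ 1 and every integer k ≥ 0, one has d/(2^k + 1) + (k/2)·(2^k/(2^k + 1)) ≥ (log d)/2 (natural logarithm). -/

import Mathlib

/-!
With `M = 2 ^ k`, the claim is `(M + 1) log d ≤ 2 d + k M`. The tangent line of `log` at the
minimizer `d = (M + 1) / 2` reduces it to `(M + 1) (log ((M + 1) / 2) - 1) ≤ k M`. This holds since
`log ((M + 1) / 2) ≤ log M = k log 2 ≤ 0.7 k` and `k < M`.
-/

/-- For every real `d ≥ 1` and integer `k ≥ 0`,
`d/(2^k + 1) + (k/2)·(2^k/(2^k + 1)) ≥ (log d)/2`. -/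
theorem score_lower_bound (d : ℝ) (hd : 1 ≤ d) (k : ℕ) :
    Real.log d / 2 ≤ d / ((2:ℝ) ^ k + 1) + ((k : ℝ) / 2) * ((2:ℝ) ^ k / ((2:ℝ) ^ k + 1)) := by
  have hM : (1:ℝ) ≤ 2 ^ k := one_le_pow₀ (by norm_num)
  have hkM : (k:ℝ) < 2 ^ k := by exact_mod_cast Nat.lt_two_pow_self
  have hlogM : Real.log ((2:ℝ) ^ k) = k * Real.log 2 := Real.log_pow 2 k
  generalize (2:ℝ) ^ k = M at *
  have hk : (0:ℝ) ≤ k := k.cast_nonneg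
  -- Tangent line of `log` at `(M + 1) / 2`, where the difference of the two sides is minimal in `d`.
  have htan : Real.log d ≤ d / ((M + 1) / 2) - 1 + Real.log ((M + 1) / 2) := by
    have h := Real.log_le_sub_one_of_pos (x := d / ((M + 1) / 2)) (by positivity)
    rw [Real.log_div (by positivity) (by positivity)] at h
    linarith
  have hmid : Real.log ((M + 1) / 2) ≤ 0.7 * k := by
    have h : Real.log ((M + 1) / 2) ≤ Real.log M :=
      Real.log_le_log (by positivity) (by linarith)
    nlinarith [Real.log_two_lt_d9]
  have hmul : Real.log d * (M + 1) ≤ 2 * d + (0.7 * k - 1) * (M + 1) := by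
    calc Real.log d * (M + 1) ≤ (d / ((M + 1) / 2) + (0.7 * k - 1)) * (M + 1) := by
          gcongr
          linarith
      _ = 2 * d + (0.7 * k - 1) * (M + 1) := by field_simp
  have hrhs : d / (M + 1) + (k : ℝ) / 2 * (M / (M + 1)) = (2 * d + k * M) / (M + 1) / 2 := by
    field_simp
  rw [hrhs]
  gcongr
  rw [le_div_iff₀ (by positivity)]
  -- The remaining inequality `(0.7 k - 1) (M + 1) ≤ k M` follows from `k < M`.
  nlinarith [mul_nonneg hk (zero_le_one.trans hM)]
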